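/- arXiv:1503.05444 — 3 statements merged into one kernel-verified Lean document; each statement's English description precedes it below -/
import Mathlib

section
/- For all nonnegative integers n, m and all x ∈ ℂ, φ_{n+m}(x) = Σ_{k=0}^{n} Σ_{j=0}^{m} C(n,k) · S(m,j) · j^{n−k} · x^j · φ_k(x). -/
open Finset

/-- Stirling numbers of the second kind. -/
def stirling2 : ℕ → ℕ → ℕ
  | 0, 0 => 1
  | 0, _ + 1 => 0
  | _ + 1, 0 => 0
  | n + 1, k + 1 => (k + 1) * stirling2 n (k + 1) + stirling2 n k

/-- The exponential polynomials φₙ(x) = Σ_{k=0}^{n} S(n,k) xᵏ. -/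
noncomputable def expPoly (n : ℕ) (x : ℂ) : ℂ :=
  ∑ k ∈ Finset.range (n + 1), (stirling2 n k : ℂ) * x ^ k


/-- The operator sending p to X times (p plus its derivative). -/
noncomputable def touchOp : Module.End ℂ (Polynomial ℂ) :=
  LinearMap.mulLeft ℂ Polynomial.X ∘ₗ (LinearMap.id + Polynomial.derivative)

theorem touchOp_apply (p : Polynomial ℂ) :
    touchOp p = Polynomial.X * (p + Polynomial.derivative p) := rfl

/-- The exponential polynomial as a formal polynomial. -/
noncomputable def touchPoly (n : ℕ) : Polynomial ℂ :=
  ∑ k ∈ Finset.range (n + 1), (stirling2 n k : ℂ) • (Polynomial.X : Polynomial ℂ) ^ k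

theorem eval_touchPoly (n : ℕ) (x : ℂ) : (touchPoly n).eval x = expPoly n x := by
  simp [touchPoly, expPoly, Polynomial.eval_finsetSum]

theorem touchOp_X_pow_mul (j : ℕ) (p : Polynomial ℂ) :
    touchOp (Polynomial.X ^ j * p) = Polynomial.X ^ j * ((touchOp + (j : Module.End ℂ (Polynomial ℂ))) p) := by
  rw [LinearMap.add_apply, touchOp_apply, touchOp_apply, Module.End.natCast_apply, nsmul_eq_mul]
  cases j with
  | zero => simp
  | succ j =>
    simp only [Polynomial.derivative_mul, Polynomial.derivative_X_pow]
    simp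
    ring

theorem touchOp_pow_X_pow_mul (n j : ℕ) (p : Polynomial ℂ) :
    (touchOp ^ n) (Polynomial.X ^ j * p) =
      Polynomial.X ^ j * (((touchOp + (j : Module.End ℂ (Polynomial ℂ))) ^ n) p) := by
  induction n generalizing p with
  | zero => simp
  | succ n ih =>
    rw [pow_succ, pow_succ, Module.End.mul_apply, Module.End.mul_apply, touchOp_X_pow_mul, ih]

theorem stirling2_eq_zero : ∀ (n k : ℕ), n < k → stirling2 n k = 0
  | 0, 0, h => by omega
  | 0, k + 1, _ => by simp [stirling2]
  | n + 1, 0, h => by omega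
  | n + 1, k + 1, h => by
    rw [stirling2, stirling2_eq_zero n (k + 1) (by omega), stirling2_eq_zero n k (by omega)]
    simp

theorem touchOp_X_pow (k : ℕ) :
    touchOp (Polynomial.X ^ k) = Polynomial.X ^ (k + 1) + (k : ℂ) • Polynomial.X ^ k := by
  have h := touchOp_X_pow_mul k 1
  rw [mul_one] at h
  rw [h, LinearMap.add_apply, touchOp_apply, Module.End.natCast_apply, Polynomial.smul_eq_C_mul]
  simp
  ring

theorem touchOp_touchPoly (n : ℕ) : touchOp (touchPoly n) = touchPoly (n + 1) := by
  have h1 : touchPoly (n + 1) = ∑ k ∈ Finset.range (n + 1),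
      (stirling2 (n + 1) (k + 1) : ℂ) • (Polynomial.X : Polynomial ℂ) ^ (k + 1) := by
    rw [touchPoly, Finset.sum_range_succ']
    simp [stirling2]
  have h2 : ∑ k ∈ Finset.range (n + 1),
      ((stirling2 n k : ℂ) * (k : ℂ)) • (Polynomial.X : Polynomial ℂ) ^ k =
      ∑ k ∈ Finset.range (n + 1), ((stirling2 n (k + 1) : ℂ) * ((k : ℂ) + 1)) •
        (Polynomial.X : Polynomial ℂ) ^ (k + 1) := by
    rw [Finset.sum_range_succ', Finset.sum_range_succ _ n, stirling2_eq_zero n (n + 1) (by omega)]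
    simp
  rw [h1, touchPoly, map_sum]
  simp only [map_smul, touchOp_X_pow, smul_add, smul_smul, Finset.sum_add_distrib]
  rw [h2, ← Finset.sum_add_distrib]
  refine Finset.sum_congr rfl fun k _ => ?_
  rw [← add_smul, stirling2]
  congr 1
  push_cast
  ring

theorem touchOp_pow_touchPoly (n m : ℕ) : (touchOp ^ n) (touchPoly m) = touchPoly (n + m) := by
  induction n with
  | zero => simp
  | succ n ih =>
    rw [pow_succ', Module.End.mul_apply, ih, touchOp_touchPoly]
    congr 1
    omega

theorem touchOp_pow_one (n : ℕ) : (touchOp ^ n) 1 = touchPoly n := by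
  have h := touchOp_pow_touchPoly n 0
  have h0 : touchPoly 0 = 1 := by simp [touchPoly, stirling2]
  rwa [h0] at h

theorem touchOp_pow_X_pow (n j : ℕ) :
    (touchOp ^ n) (Polynomial.X ^ j) = Polynomial.X ^ j *
      ∑ k ∈ Finset.range (n + 1), ((n.choose k : ℂ) * (j : ℂ) ^ (n - k)) • touchPoly k := by
  have h := touchOp_pow_X_pow_mul n j 1
  rw [mul_one] at h
  rw [h, (Nat.cast_commute j touchOp).symm.add_pow, LinearMap.sum_apply]
  congr 1
  refine Finset.sum_congr rfl fun k _ => ?_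
  rw [← touchOp_pow_one, mul_assoc, Module.End.mul_apply, ← Nat.cast_pow, ← Nat.cast_mul,
    Module.End.natCast_apply, map_nsmul, ← Nat.cast_smul_eq_nsmul ℂ]
  congr 1
  push_cast
  ring

theorem stmt1 (n m : ℕ) (x : ℂ) :
    expPoly (n + m) x =
      ∑ k ∈ range (n + 1), ∑ j ∈ range (m + 1),
        (n.choose k : ℂ) * (stirling2 m j : ℂ) * (j : ℂ) ^ (n - k) * x ^ j * expPoly k x := by
  rw [← eval_touchPoly, ← touchOp_pow_touchPoly, touchPoly, map_sum, Polynomial.eval_finsetSum,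
    Finset.sum_comm]
  refine Finset.sum_congr rfl fun j _ => ?_
  rw [map_smul, touchOp_pow_X_pow, Polynomial.eval_smul, Polynomial.eval_mul,
    Polynomial.eval_finsetSum, Finset.mul_sum, Finset.smul_sum]
  refine Finset.sum_congr rfl fun k _ => ?_
  simp only [Polynomial.eval_smul, eval_touchPoly, Polynomial.eval_pow, Polynomial.eval_X,
    smul_eq_mul]
  ring
end

section
/- Let g be a polynomial with complex coefficients, and define the operator M̂g(x) = x·g(x) + x·g′(x). Then for all x, t ∈ ℂ, the series Σ_{n=0}^{∞} (M̂ⁿ g)(x) · tⁿ/n! converges absolutely and equals e^{x(e^t−1)} · g(x e^t). -/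
/-- The operator M̂g(x) = x·g(x) + x·g′(x) on polynomials. -/
noncomputable def Mhat (p : Polynomial ℂ) : Polynomial ℂ :=
  Polynomial.X * p + Polynomial.X * Polynomial.derivative p

theorem mhat_hasDerivAt (x : ℂ) (g : Polynomial ℂ) (t : ℂ) :
    HasDerivAt (fun t : ℂ => Complex.exp (x * (Complex.exp t - 1)) *
      Polynomial.eval (x * Complex.exp t) g)
      (Complex.exp (x * (Complex.exp t - 1)) *
      Polynomial.eval (x * Complex.exp t) (Mhat g)) t := by
  have h1 : HasDerivAt (fun t : ℂ => x * Complex.exp t) (x * Complex.exp t) t :=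
    (Complex.hasDerivAt_exp t).const_mul x
  have h2 : HasDerivAt (fun t : ℂ => x * (Complex.exp t - 1)) (x * Complex.exp t) t :=
    ((Complex.hasDerivAt_exp t).sub_const 1).const_mul x
  have h3 := (g.hasDerivAt (x * Complex.exp t)).comp t h1
  have h4 := h2.cexp.mul h3
  refine h4.congr_deriv ?_
  simp only [Mhat, Polynomial.eval_add, Polynomial.eval_mul, Polynomial.eval_X,
    Function.comp_apply]
  ring

theorem mhat_iteratedDeriv (x : ℂ) (n : ℕ) (g : Polynomial ℂ) :
    iteratedDeriv n (fun t : ℂ => Complex.exp (x * (Complex.exp t - 1)) *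
      Polynomial.eval (x * Complex.exp t) g) =
    fun t : ℂ => Complex.exp (x * (Complex.exp t - 1)) *
      Polynomial.eval (x * Complex.exp t) (Mhat^[n] g) := by
  induction n generalizing g with
  | zero => simp
  | succ n ih =>
    rw [iteratedDeriv_succ', Function.iterate_succ_apply, ← ih]
    congr 1
    funext t
    exact (mhat_hasDerivAt x g t).deriv

theorem stmt2 (g : Polynomial ℂ) (x t : ℂ) :
    Summable (fun n : ℕ => ‖Polynomial.eval x (Mhat^[n] g) * t ^ n / (n.factorial : ℂ)‖) ∧
    HasSum (fun n : ℕ => Polynomial.eval x (Mhat^[n] g) * t ^ n / (n.factorial : ℂ))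
      (Complex.exp (x * (Complex.exp t - 1)) * Polynomial.eval (x * Complex.exp t) g) := by
  have hd : Differentiable ℂ (fun t : ℂ => Complex.exp (x * (Complex.exp t - 1)) *
      Polynomial.eval (x * Complex.exp t) g) :=
    fun t => (mhat_hasDerivAt x g t).differentiableAt
  have h := Complex.hasSum_taylorSeries_of_entire hd 0 t
  have key : HasSum (fun n : ℕ => Polynomial.eval x (Mhat^[n] g) * t ^ n / (n.factorial : ℂ))
      (Complex.exp (x * (Complex.exp t - 1)) * Polynomial.eval (x * Complex.exp t) g) := by
    have e : (fun n : ℕ => Polynomial.eval x (Mhat^[n] g) * t ^ n / (n.factorial : ℂ)) =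
        (fun n : ℕ => (n.factorial : ℂ)⁻¹ • (t - 0) ^ n •
          iteratedDeriv n (fun t : ℂ => Complex.exp (x * (Complex.exp t - 1)) *
            Polynomial.eval (x * Complex.exp t) g) 0) := by
      funext n
      rw [mhat_iteratedDeriv]
      simp [div_eq_mul_inv]
      ring
    rw [e]
    exact h
  exact ⟨key.summable.norm, key⟩
end

section
/- For all nonnegative integers n, m and all α, x ∈ ℂ, w_{n+m}^{(α)}(x) = Σ_{k=0}^{m} Σ_{j=0}^{n} S(m,k) · C(n,j) · C(α+k−1,k) · k! · k^{n−j} · x^k · w_j^{(α+k)}(x). -/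
open Finset

/-- Generalized binomial coefficient C(α+k−1,k) = α(α+1)⋯(α+k−1)/k!. -/
noncomputable def gbinom (α : ℂ) (k : ℕ) : ℂ :=
  Polynomial.eval α (ascPochhammer ℂ k) / (k.factorial : ℂ)

/-- The general geometric polynomials w_n^{(α)}(x). -/
noncomputable def geomPoly (α : ℂ) (n : ℕ) (x : ℂ) : ℂ :=
  ∑ k ∈ Finset.range (n + 1), (stirling2 n k : ℂ) * gbinom α k * (k.factorial : ℂ) * x ^ k

/-- The operator (F a)_l = l a_l + a_{l+1} on sequences. -/
noncomputable def opF : (ℕ → ℂ) →ₗ[ℂ] (ℕ → ℂ) where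
  toFun a := fun l => (l : ℂ) * a l + a (l + 1)
  map_add' a b := by funext l; simp; ring
  map_smul' c a := by funext l; simp; ring

/-- Shift by k. -/
noncomputable def opS (k : ℕ) : (ℕ → ℂ) →ₗ[ℂ] (ℕ → ℂ) where
  toFun a := fun l => a (k + l)
  map_add' a b := by funext l; simp
  map_smul' c a := by funext l; simp

lemma opF_apply (a : ℕ → ℂ) (l : ℕ) : opF a l = (l : ℂ) * a l + a (l + 1) := rfl

lemma opS_apply (k : ℕ) (a : ℕ → ℂ) (l : ℕ) : opS k a l = a (k + l) := rfl

lemma stirling2_of_lt : ∀ n k : ℕ, n < k → stirling2 n k = 0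
  | 0, 0, h => by omega
  | 0, _ + 1, _ => by simp [stirling2]
  | _ + 1, 0, h => by omega
  | n + 1, k + 1, h => by
    simp [stirling2, stirling2_of_lt n k (by omega), stirling2_of_lt n (k + 1) (by omega)]

lemma stirling_sum (m : ℕ) : ∀ b : ℕ → ℂ,
    ∑ k ∈ range (m + 1), (stirling2 m k : ℂ) * b k = (opF ^ m) b 0 := by
  induction m with
  | zero => intro b; simp [stirling2]
  | succ m ih =>
    intro b
    rw [pow_succ, Module.End.mul_apply, ← ih (opF b), sum_range_succ']
    have h0 : stirling2 (m + 1) 0 = 0 := by simp [stirling2]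
    have e : ∀ k, (stirling2 (m + 1) (k + 1) : ℂ) * b (k + 1) =
        ((stirling2 m (k + 1) : ℂ) * (((k + 1 : ℕ) : ℂ) * b (k + 1)))
          + (stirling2 m k : ℂ) * b (k + 1) := by
      intro k
      simp only [stirling2]
      push_cast
      ring
    simp only [e, h0, opF_apply, mul_add, sum_add_distrib]
    have h1 := sum_range_succ' (fun k => (stirling2 m k : ℂ) * ((k : ℂ) * b k)) (m + 1)
    rw [sum_range_succ, stirling2_of_lt m (m + 1) (by omega)] at h1
    simp only [Nat.cast_zero, zero_mul, mul_zero, add_zero] at h1 ⊢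
    rw [← h1]

lemma opS_opF (k : ℕ) (a : ℕ → ℂ) :
    opS k (opF a) = (opF + (k : Module.End ℂ (ℕ → ℂ))) (opS k a) := by
  funext l
  rw [LinearMap.add_apply, Module.End.natCast_apply]
  simp [opS_apply, opF_apply, add_assoc]
  ring

lemma opS_opF_pow (k n : ℕ) : ∀ a : ℕ → ℂ,
    opS k ((opF ^ n) a) = ((opF + (k : Module.End ℂ (ℕ → ℂ))) ^ n) (opS k a) := by
  induction n with
  | zero => intro a; simp
  | succ n ih =>
    intro a
    rw [pow_succ, pow_succ, Module.End.mul_apply, Module.End.mul_apply, ih, opS_opF]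

lemma opF_pow_apply (k n : ℕ) (a : ℕ → ℂ) :
    (opF ^ n) a k = ∑ j ∈ range (n + 1),
      (n.choose j : ℂ) * (k : ℂ) ^ (n - j) * (opF ^ j) (opS k a) 0 := by
  have h : (opF ^ n) a k = opS k ((opF ^ n) a) 0 := by simp [opS_apply]
  rw [h, opS_opF_pow, (Nat.cast_commute k opF).symm.add_pow, LinearMap.sum_apply,
    Finset.sum_apply]
  refine sum_congr rfl fun j _ => ?_
  rw [← Nat.cast_pow, mul_assoc, ← Nat.cast_mul, Module.End.mul_apply, Module.End.natCast_apply,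
    map_nsmul]
  simp only [Pi.smul_apply, nsmul_eq_mul]
  push_cast
  ring

lemma gbinom_mul (α : ℂ) (k : ℕ) :
    gbinom α k * (k.factorial : ℂ) = Polynomial.eval α (ascPochhammer ℂ k) := by
  unfold gbinom
  exact div_mul_cancel₀ _ (by exact_mod_cast k.factorial_ne_zero)

lemma geomPoly_eq (α x : ℂ) (n : ℕ) :
    geomPoly α n x =
      (opF ^ n) (fun k => Polynomial.eval α (ascPochhammer ℂ k) * x ^ k) 0 := by
  rw [← stirling_sum, geomPoly]
  refine sum_congr rfl fun k _ => ?_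
  rw [← gbinom_mul]
  ring

lemma opS_seq (α x : ℂ) (k : ℕ) :
    opS k (fun k => Polynomial.eval α (ascPochhammer ℂ k) * x ^ k) =
      (Polynomial.eval α (ascPochhammer ℂ k) * x ^ k) •
        (fun i => Polynomial.eval (α + k) (ascPochhammer ℂ i) * x ^ i) := by
  funext i
  simp only [opS_apply, Pi.smul_apply, smul_eq_mul]
  rw [← ascPochhammer_mul, Polynomial.eval_mul, Polynomial.eval_comp, pow_add]
  simp
  ring

theorem stmt9 (n m : ℕ) (α x : ℂ) :
    geomPoly α (n + m) x =
      ∑ k ∈ range (m + 1), ∑ j ∈ range (n + 1),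
        (stirling2 m k : ℂ) * (n.choose j : ℂ) * gbinom α k * (k.factorial : ℂ) *
          (k : ℂ) ^ (n - j) * x ^ k * geomPoly (α + k) j x := by
  rw [geomPoly_eq, add_comm n m, pow_add, Module.End.mul_apply, ← stirling_sum]
  refine sum_congr rfl fun k _ => ?_
  rw [opF_pow_apply, mul_sum]
  refine sum_congr rfl fun j _ => ?_
  rw [opS_seq, map_smul, geomPoly_eq, ← gbinom_mul, Pi.smul_apply, smul_eq_mul]
  ring
end
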